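/- Let l ≥ 2, F = GF(2^{2l}), t = 2^l, and L₇ = {α ∈ F : α^{t+1} ≠ 1}. The minimum distance of the binary Goppa code Γ(L₇, X^{t+1} + 1) equals exactly its design distance 2(t+1) + 1 = 2t + 3: every nonempty codeword S satisfies |S| ≥ 2t + 3, and there exists a codeword of cardinality exactly 2t + 3. (Paper's Lemma 10.) -/

import Mathlib

open Finset

/-!
Write `f = ∏ α ∈ S, (X - α)` for the locator polynomial of a finite set `S`. Over any field, `S`
is a codeword of the Goppa code of `G` exactly when `G ∣ f'`. Over a perfect field of characteristic
two `f'` is a square, so a squarefree `G` even satisfies `G ^ 2 ∣ f'`, and comparing degrees gives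
`2 * deg G + 1 ≤ #S`. Equality holds if `f' = G ^ 2`; for `G = X ^ n + 1` with `n` odd this is
solved by
`f = X * (X ^ n + 1) ^ 2 + (a + a⁻¹) * X ^ (n + 1) = X * (X ^ n - a) * (X ^ n - a⁻¹)`,
which has `2 * n + 1` distinct roots in the field as soon as the field contains the `n`-th roots of
unity and `a ≠ 0, 1` is an `n`-th power.
-/

open Polynomial Lagrange

/-- `S` is the support of a codeword of the binary Goppa code `Γ(L, G)`, where the location set `L`
is the largest possible one, the set of all non-roots of `G`. -/
def IsGoppaCodeword {F : Type*} [Field F] (G : F[X]) (S : Finset F) : Prop :=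
  (∀ α ∈ S, G.eval α ≠ 0) ∧ ∀ j < G.natDegree, ∑ α ∈ S, α ^ j * (G.eval α)⁻¹ = 0

section Locator

variable {F : Type*} [Field F] {G f : F[X]} {S : Finset F}

theorem IsGoppaCodeword.sum_C_mul_divByMonic_eq_zero (h : IsGoppaCodeword G S) :
    ∑ α ∈ S, C (G.eval α)⁻¹ * (G /ₘ (X - C α)) = 0 := by
  ext k
  simp only [finsetSum_coeff, coeff_C_mul, coeff_divByMonic_X_sub_C, coeff_zero, mul_sum]
  rw [sum_comm]
  refine sum_eq_zero fun i hi => ?_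
  obtain ⟨hki, hiG⟩ := mem_Icc.1 hi
  calc ∑ α ∈ S, (G.eval α)⁻¹ * (α ^ (i - (k + 1)) * G.coeff i)
      = (∑ α ∈ S, α ^ (i - (k + 1)) * (G.eval α)⁻¹) * G.coeff i := by
        rw [sum_mul]
        exact sum_congr rfl fun α _ => by ring
    _ = 0 := by rw [h.2 _ (by lia), zero_mul]

theorem nodal_mul_C_inv_eval_mul_divByMonic [DecidableEq F] {α : F} (hα : α ∈ S)
    (hGα : G.eval α ≠ 0) :
    nodal S id * (C (G.eval α)⁻¹ * (G /ₘ (X - C α))) =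
      G * (C (G.eval α)⁻¹ * nodal (S.erase α) id) - nodal (S.erase α) id := by
  have hdiv : C (G.eval α) + (X - C α) * (G /ₘ (X - C α)) = G := by
    rw [← modByMonic_X_sub_C_eq_C_eval, modByMonic_add_div]
  have hinv : C (G.eval α)⁻¹ * C (G.eval α) = 1 := by
    rw [← C_mul, inv_mul_cancel₀ hGα, C_1]
  rw [nodal_eq_mul_nodal_erase hα, id]
  linear_combination C (G.eval α)⁻¹ * nodal (S.erase α) id * hdiv - nodal (S.erase α) id * hinv

theorem IsGoppaCodeword.dvd_derivative_nodal (h : IsGoppaCodeword G S) :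
    G ∣ derivative (nodal S id) := by
  classical
  refine ⟨∑ α ∈ S, C (G.eval α)⁻¹ * nodal (S.erase α) id, ?_⟩
  have hsum := congrArg (nodal S id * ·) h.sum_C_mul_divByMonic_eq_zero
  simp only [mul_sum, mul_zero] at hsum
  rw [sum_congr rfl fun α hα => nodal_mul_C_inv_eval_mul_divByMonic hα (h.1 α hα),
    sum_sub_distrib, ← derivative_nodal, ← mul_sum, sub_eq_zero] at hsum
  exact hsum.symm

theorem sum_eval_mul_inv_eval_derivative_nodal_eq_zero {P : F[X]} (hP : P.natDegree + 1 < #S) :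
    ∑ α ∈ S, P.eval α * ((derivative (nodal S id)).eval α)⁻¹ = 0 := by
  classical
  have hdeg : P.degree < #S := degree_le_natDegree.trans_lt (by exact_mod_cast (by lia))
  have hcoeff : P.coeff (#S - 1) = 0 := coeff_eq_zero_of_natDegree_lt (by lia)
  rw [← hcoeff, coeff_eq_sum (v := id) Function.injective_id.injOn hdeg]
  refine sum_congr rfl fun α hα => ?_
  rw [← id_eq α, eval_nodal_derivative_eval_node_eq hα, eval_nodal, div_eq_mul_inv]
  rfl

theorem separable_nodal_id (S : Finset F) : (nodal S id).Separable :=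
  separable_prod_X_sub_C_iff'.2 Function.injective_id.injOn

theorem eval_derivative_nodal_id_ne_zero {α : F} (hα : α ∈ S) :
    (derivative (nodal S id)).eval α ≠ 0 :=
  (separable_nodal_id S).eval₂_derivative_ne_zero (RingHom.id F)
    (eval_nodal_at_node (v := id) hα)

theorem derivative_nodal_id_ne_zero (hS : S.Nonempty) : derivative (nodal S id) ≠ 0 := by
  obtain ⟨α, hα⟩ := hS
  intro hzero
  exact eval_derivative_nodal_id_ne_zero hα (by rw [hzero, eval_zero])

theorem natDegree_derivative_nodal_id_lt (hS : S.Nonempty) :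
    (derivative (nodal S id)).natDegree < #S := by
  have hdeg : (nodal S id).natDegree = #S := natDegree_nodal
  exact hdeg ▸ natDegree_derivative_lt (hdeg ▸ hS.card_ne_zero)

theorem isGoppaCodeword_of_dvd_derivative_nodal (hdvd : G ∣ derivative (nodal S id)) :
    IsGoppaCodeword G S := by
  obtain ⟨H, hH⟩ := hdvd
  have heval {α : F} (hα : α ∈ S) : G.eval α * H.eval α ≠ 0 := by
    rw [← eval_mul, ← hH]
    exact eval_derivative_nodal_id_ne_zero hα
  refine ⟨fun α hα => left_ne_zero_of_mul (heval hα), fun j hj => ?_⟩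
  obtain rfl | hS := S.eq_empty_or_nonempty
  · exact sum_empty
  have hGH : G * H ≠ 0 := hH ▸ derivative_nodal_id_ne_zero hS
  have hH0 : H ≠ 0 := right_ne_zero_of_mul hGH
  have hdegree : (X ^ j * H).natDegree + 1 < #S := by
    have hlt := natDegree_derivative_nodal_id_lt hS
    rw [hH, natDegree_mul (left_ne_zero_of_mul hGH) hH0] at hlt
    rw [natDegree_X_pow_mul j hH0]
    lia
  rw [← sum_eval_mul_inv_eval_derivative_nodal_eq_zero hdegree]
  refine sum_congr rfl fun α hα => ?_
  rw [hH, eval_mul, eval_mul, eval_pow, eval_X, mul_inv]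
  field_simp [right_ne_zero_of_mul (heval hα)]

theorem isGoppaCodeword_iff_dvd_derivative_nodal :
    IsGoppaCodeword G S ↔ G ∣ derivative (nodal S id) :=
  ⟨IsGoppaCodeword.dvd_derivative_nodal, isGoppaCodeword_of_dvd_derivative_nodal⟩

theorem nodal_roots_toFinset [DecidableEq F] (hmonic : f.Monic) (hsplits : f.Splits)
    (hsep : f.Separable) : nodal f.roots.toFinset id = f := by
  rw [nodal_eq, prod_eq_multiset_prod, Multiset.toFinset_val, (nodup_roots hsep).dedup]
  exact (hsplits.eq_prod_roots_of_monic hmonic).symm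

theorem exists_isGoppaCodeword_card_eq_natDegree (hmonic : f.Monic) (hsplits : f.Splits)
    (hsep : f.Separable) (hG : G ∣ derivative f) :
    ∃ S : Finset F, IsGoppaCodeword G S ∧ #S = f.natDegree := by
  classical
  have hnodal := nodal_roots_toFinset hmonic hsplits hsep
  refine ⟨f.roots.toFinset, isGoppaCodeword_iff_dvd_derivative_nodal.2 (by rwa [hnodal]), ?_⟩
  rw [← natDegree_nodal (v := id), hnodal]

end Locator

section DesignDistance

theorem iterate_derivative_eq_zero_of_charP {R : Type*} [CommSemiring R] (p : ℕ) [NeZero p]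
    [CharP R p] (f : R[X]) : derivative^[p] f = 0 := by
  have hfactorial : (p.factorial : R[X]) = 0 :=
    (CharP.cast_eq_zero_iff R[X] p _).2 (p.dvd_factorial (NeZero.pos p) le_rfl)
  rw [← factorial_smul_hasseDeriv, LinearMap.smul_apply, nsmul_eq_mul, hfactorial, zero_mul]

theorem isSquare_derivative {R : Type*} [CommRing R] [NoZeroDivisors R] [CharP R 2]
    [PerfectRing R 2] (f : R[X]) : IsSquare (derivative f) := by
  have hzero : derivative (derivative f) = 0 := iterate_derivative_eq_zero_of_charP 2 f
  rw [← expand_contract 2 hzero two_ne_zero, polynomial_expand_eq]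
  exact IsSquare.sq _

variable {F : Type*} [Field F] [CharP F 2] [PerfectRing F 2]

theorem IsGoppaCodeword.sq_dvd_derivative_nodal {G : F[X]} {S : Finset F} (hG : Squarefree G)
    (h : IsGoppaCodeword G S) : G ^ 2 ∣ derivative (nodal S id) := by
  obtain ⟨g, hg⟩ := (isSquare_derivative (nodal S id)).exists_sq
  have hdvd : G ∣ g ^ 2 := hg ▸ h.dvd_derivative_nodal
  rw [hg]
  exact pow_dvd_pow_of_dvd ((hG.dvd_pow_iff_dvd two_ne_zero).1 hdvd) 2

theorem IsGoppaCodeword.two_mul_natDegree_lt_card {G : F[X]} {S : Finset F} (hG : Squarefree G)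
    (h : IsGoppaCodeword G S) (hS : S.Nonempty) : 2 * G.natDegree < #S := by
  have hle := natDegree_le_of_dvd (h.sq_dvd_derivative_nodal hG) (derivative_nodal_id_ne_zero hS)
  rw [natDegree_pow] at hle
  exact hle.trans_lt (natDegree_derivative_nodal_id_lt hS)

end DesignDistance

section RootsOfUnity

theorem isCoprime_X_X_pow_add_one {R : Type*} [CommRing R] {n : ℕ} (hn : n ≠ 0) :
    IsCoprime (X : R[X]) (X ^ n + 1) := by
  refine ⟨-X ^ (n - 1), 1, ?_⟩
  rw [neg_mul, pow_sub_one_mul hn]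
  ring

variable {F : Type*} [Field F] {n : ℕ}

/-- The polynomial whose roots form a codeword of least weight in the Goppa code of `X ^ n + 1` in
characteristic two. Its derivative is `(X ^ n + 1) ^ 2` for every `c`; the parameter is chosen so
that the polynomial splits. -/
noncomputable def minWeightLocator (n : ℕ) (c : F) : F[X] :=
  X * (X ^ n + 1) ^ 2 + C c * X ^ (n + 1)

theorem natDegree_X_pow_add_one : (X ^ n + 1 : F[X]).natDegree = n :=
  natDegree_X_pow_add_C (r := (1 : F))

theorem monic_X_mul_X_pow_add_one_sq (hn : n ≠ 0) : (X * (X ^ n + 1 : F[X]) ^ 2).Monic :=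
  monic_X.mul ((monic_X_pow_add_C 1 hn).pow 2)

theorem natDegree_X_mul_X_pow_add_one_sq (hn : n ≠ 0) :
    (X * (X ^ n + 1 : F[X]) ^ 2).natDegree = 2 * n + 1 := by
  rw [natDegree_X_mul (right_ne_zero_of_mul (monic_X_mul_X_pow_add_one_sq hn).ne_zero),
    natDegree_pow, natDegree_X_pow_add_one]

theorem degree_C_mul_X_pow_succ_lt (hn : n ≠ 0) (c : F) :
    (C c * X ^ (n + 1)).degree < (X * (X ^ n + 1 : F[X]) ^ 2).degree := by
  rw [degree_eq_natDegree (monic_X_mul_X_pow_add_one_sq hn).ne_zero,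
    natDegree_X_mul_X_pow_add_one_sq hn]
  exact (degree_C_mul_X_pow_le (n + 1) c).trans_lt (by exact_mod_cast (by lia))

theorem monic_minWeightLocator (hn : n ≠ 0) (c : F) : (minWeightLocator n c).Monic :=
  (monic_X_mul_X_pow_add_one_sq hn).add_of_left (degree_C_mul_X_pow_succ_lt hn c)

theorem natDegree_minWeightLocator (hn : n ≠ 0) (c : F) :
    (minWeightLocator n c).natDegree = 2 * n + 1 := by
  rw [minWeightLocator, natDegree_add_eq_left_of_degree_lt (degree_C_mul_X_pow_succ_lt hn c),
    natDegree_X_mul_X_pow_add_one_sq hn]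

variable [CharP F 2]

theorem derivative_minWeightLocator (hn : Odd n) (c : F) :
    derivative (minWeightLocator n c) = (X ^ n + 1) ^ 2 := by
  have hcast : ((n + 1 : ℕ) : F) = 0 := (CharP.cast_eq_zero_iff F 2 _).2 hn.add_one.two_dvd
  have htwo : (2 : F[X]) = 0 := CharTwo.two_eq_zero
  rw [minWeightLocator, derivative_add, derivative_mul, derivative_sq, derivative_C_mul_X_pow,
    hcast, C_ofNat, htwo, derivative_X]
  simp only [mul_zero, zero_mul, C_0, add_zero, one_mul]

theorem separable_minWeightLocator (hn : Odd n) {c : F} (hc : c ≠ 0) :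
    (minWeightLocator n c).Separable := by
  have hunit : IsUnit (C c) := isUnit_C.2 hc.isUnit
  have hcoprime : IsCoprime (C c * X ^ (n + 1)) ((X ^ n + 1) ^ 2) :=
    (isCoprime_mul_unit_left_left hunit _ _).2 (isCoprime_X_X_pow_add_one hn.pos.ne').pow
  rw [Polynomial.Separable, derivative_minWeightLocator hn, minWeightLocator]
  exact hcoprime.mul_add_right_left X

theorem minWeightLocator_add_inv {a : F} (ha : a ≠ 0) :
    minWeightLocator n (a + a⁻¹) = X * ((X ^ n - C a) * (X ^ n - C a⁻¹)) := by
  have hinv : C a * C a⁻¹ = 1 := by rw [← C_mul, mul_inv_cancel₀ ha, C_1]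
  have htwo : (2 : F[X]) = 0 := CharTwo.two_eq_zero
  rw [minWeightLocator, C_add]
  linear_combination (X ^ (n + 1) * (1 + C a + C a⁻¹)) * htwo - X * hinv

theorem splits_minWeightLocator {ζ g : F} (hζ : IsPrimitiveRoot ζ n) (hg : g ≠ 0) :
    (minWeightLocator n (g ^ n + (g ^ n)⁻¹)).Splits := by
  rw [minWeightLocator_add_inv (pow_ne_zero n hg)]
  exact .mul .X <| .mul (X_pow_sub_C_splits_of_isPrimitiveRoot hζ rfl)
    (X_pow_sub_C_splits_of_isPrimitiveRoot hζ (inv_pow g n))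

theorem add_inv_ne_zero {a : F} (ha : a ≠ 0) (ha1 : a ≠ 1) : a + a⁻¹ ≠ 0 := by
  intro hzero
  have hsq : a * a = 1 := by
    nth_rewrite 2 [CharTwo.add_eq_zero.1 hzero]
    exact mul_inv_cancel₀ ha
  rw [mul_self_eq_one_iff, CharTwo.neg_eq, or_self] at hsq
  exact ha1 hsq

theorem exists_isGoppaCodeword_X_pow_add_one {ζ g : F} (hn : Odd n) (hζ : IsPrimitiveRoot ζ n)
    (hg : g ≠ 0) (hgn : g ^ n ≠ 1) :
    ∃ S : Finset F, IsGoppaCodeword (X ^ n + 1) S ∧ #S = 2 * n + 1 := by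
  have hn0 : n ≠ 0 := hn.pos.ne'
  rw [← natDegree_minWeightLocator hn0 (g ^ n + (g ^ n)⁻¹)]
  refine exists_isGoppaCodeword_card_eq_natDegree (monic_minWeightLocator hn0 _)
    (splits_minWeightLocator hζ hg)
    (separable_minWeightLocator hn (add_inv_ne_zero (pow_ne_zero n hg) hgn)) ?_
  rw [derivative_minWeightLocator hn]
  exact dvd_pow_self _ two_ne_zero

theorem squarefree_X_pow_add_one (hn : Odd n) : Squarefree (X ^ n + 1 : F[X]) := by
  have hcast : (n : F) ≠ 0 := (CharP.cast_eq_zero_iff F 2 n).not.2 hn.not_two_dvd_nat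
  have hsep : (X ^ n - C 1 : F[X]).Separable := separable_X_pow_sub_C 1 hcast one_ne_zero
  rw [CharTwo.sub_eq_add, C_1] at hsep
  exact hsep.squarefree

theorem isGoppaCodeword_X_pow_add_one_iff {S : Finset F} :
    IsGoppaCodeword (X ^ n + 1) S ↔
      (∀ α ∈ S, α ^ n ≠ 1) ∧ ∀ j < n, ∑ α ∈ S, α ^ j * (α ^ n + 1)⁻¹ = 0 := by
  simp only [IsGoppaCodeword, natDegree_X_pow_add_one, eval_add, eval_pow, eval_X, eval_one, ne_eq,
    CharTwo.add_eq_zero]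

end RootsOfUnity

section FiniteField

variable (F : Type*) [Field F] [Finite F]

theorem exists_isPrimitiveRoot_natCard_sub_one :
    ∃ g : F, IsPrimitiveRoot g (Nat.card F - 1) := by
  obtain ⟨u, hu⟩ := IsCyclic.exists_ofOrder_eq_natCard (α := Fˣ)
  rw [Nat.card_units] at hu
  exact ⟨u, IsPrimitiveRoot.coe_units_iff.2 (hu ▸ IsPrimitiveRoot.orderOf u)⟩

theorem odd_natCard_sub_one [CharP F 2] : Odd (Nat.card F - 1) := by
  have := Fintype.ofFinite F
  have hdvd : 2 ∣ Nat.card F := by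
    rw [← CharP.cast_eq_zero_iff F 2, Nat.card_eq_fintype_card, FiniteField.cast_card_eq_zero]
  exact Nat.Even.sub_odd Nat.card_pos (even_iff_two_dvd.2 hdvd) odd_one

theorem natCard_galoisField_two_mul_sub_one (p : ℕ) [Fact p.Prime] {l : ℕ} (hl : l ≠ 0) :
    Nat.card (GaloisField p (2 * l)) - 1 = (p ^ l + 1) * (p ^ l - 1) := by
  rw [GaloisField.card p (2 * l) (by lia), mul_comm 2 l, pow_mul]
  exact Nat.sq_sub_sq (p ^ l) 1

end FiniteField

theorem stmt_15_general {F : Type*} [Field F] [Finite F] [CharP F 2] {n : ℕ}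
    (hdvd : n ∣ Nat.card F - 1) (hlt : n < Nat.card F - 1) :
    (∀ S : Finset F,
        (∀ α ∈ S, α ^ n ≠ 1) →
        (∀ j < n, ∑ α ∈ S, α ^ j * (α ^ n + 1)⁻¹ = 0) →
        S.Nonempty → 2 * n + 1 ≤ #S) ∧
    (∃ S : Finset F,
        (∀ α ∈ S, α ^ n ≠ 1) ∧
        (∀ j < n, ∑ α ∈ S, α ^ j * (α ^ n + 1)⁻¹ = 0) ∧
        #S = 2 * n + 1) := by
  have hodd : Odd n := (odd_natCard_sub_one F).of_dvd_nat hdvd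
  refine ⟨fun S hloc hsum hS => ?_, ?_⟩
  · have hcode := isGoppaCodeword_X_pow_add_one_iff.2 ⟨hloc, hsum⟩
    have hcard := hcode.two_mul_natDegree_lt_card (squarefree_X_pow_add_one hodd) hS
    rwa [natDegree_X_pow_add_one] at hcard
  · obtain ⟨g, hg⟩ := exists_isPrimitiveRoot_natCard_sub_one F
    obtain ⟨m, hm⟩ := hdvd
    have hζ : IsPrimitiveRoot (g ^ m) n := hg.pow (by lia) (by rw [hm, mul_comm])
    have hgn : g ^ n ≠ 1 := hg.pow_ne_one_of_pos_of_lt hodd.pos.ne' hlt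
    obtain ⟨S, hcode, hcard⟩ :=
      exists_isGoppaCodeword_X_pow_add_one hodd hζ (hg.ne_zero (by lia)) hgn
    obtain ⟨hloc, hsum⟩ := isGoppaCodeword_X_pow_add_one_iff.1 hcode
    exact ⟨S, hloc, hsum, hcard⟩

/-- Paper's Lemma 10: for `l ≥ 2`, `F = GF(2^(2l))`, `t = 2^l`,
`L₇ = {α : α^(t+1) ≠ 1}`, the minimum distance of the binary Goppa code
`Γ(L₇, X^(t+1) + 1)` equals exactly its design distance `2(t+1) + 1 = 2t + 3`:
every nonempty codeword has cardinality at least `2t + 3`, and a codeword of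
cardinality exactly `2t + 3` exists. -/
theorem stmt_15 (l : ℕ) (hl : 2 ≤ l) (t : ℕ) (ht : t = 2 ^ l) :
    (∀ S : Finset (GaloisField 2 (2 * l)),
        (∀ α ∈ S, α ^ (t + 1) ≠ 1) →
        (∀ j < t + 1, ∑ α ∈ S, α ^ j * (α ^ (t + 1) + 1)⁻¹ = 0) →
        S.Nonempty → 2 * t + 3 ≤ S.card) ∧
    (∃ S : Finset (GaloisField 2 (2 * l)),
        (∀ α ∈ S, α ^ (t + 1) ≠ 1) ∧
        (∀ j < t + 1, ∑ α ∈ S, α ^ j * (α ^ (t + 1) + 1)⁻¹ = 0) ∧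
        S.card = 2 * t + 3) := by
  have hcard : Nat.card (GaloisField 2 (2 * l)) - 1 = (t + 1) * (t - 1) :=
    ht ▸ natCard_galoisField_two_mul_sub_one 2 (by lia)
  have ht4 : 2 ^ 2 ≤ t := ht ▸ Nat.pow_le_pow_right two_pos hl
  exact stmt_15_general (hcard ▸ dvd_mul_right (t + 1) (t - 1))
    (hcard ▸ lt_mul_of_one_lt_right (by lia) (by lia))
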